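/- Let κ be a (P,ρ)-kernel on a locally finite weakly ranked poset (P,ρ) and let ℋ be the associated Chow function. Then ℋ is symmetric: for every s < t in P, ℋ_{st}(x) = x^{ρ_{st}−1} ℋ_{st}(1/x). -/

import Mathlib

open Finset Polynomial
open scoped Classical

noncomputable section

variable {α : Type*}

/-- Convolution product in the incidence algebra of a locally finite poset over `ℤ[x]`.
Only the values on intervals `s ≤ t` are relevant. -/
def conv [PartialOrder α] [LocallyFiniteOrder α] (a b : α → α → Polynomial ℤ) :
    α → α → Polynomial ℤ :=
  fun s t => ∑ w ∈ Finset.Icc s t, a s w * b w t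

/-- The identity `δ` of the incidence algebra. -/
def dlt [PartialOrder α] : α → α → Polynomial ℤ :=
  fun s t => if s = t then 1 else 0

/-- The involution `a ↦ a^rev`, given by `(a^rev)_{st}(x) = x^{ρ_{st}} a_{st}(1/x)`. -/
def rev (ρ : α → α → ℕ) (a : α → α → Polynomial ℤ) : α → α → Polynomial ℤ :=
  fun s t => (a s t).reflect (ρ s t)

/-- A weak rank function on a poset. -/
structure IsWeakRank [Preorder α] (ρ : α → α → ℕ) : Prop where
  pos : ∀ ⦃s t : α⦄, s < t → 0 < ρ s t
  add : ∀ ⦃s w t : α⦄, s ≤ w → w ≤ t → ρ s t = ρ s w + ρ w t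

/-- `κ` is a `(P,ρ)`-kernel: it lies in `I_ρ(P)`, is `1` on the diagonal, and `κ⁻¹ = κ^rev`. -/
structure IsKernel [PartialOrder α] [LocallyFiniteOrder α] (ρ : α → α → ℕ)
    (κ : α → α → Polynomial ℤ) : Prop where
  degLE : ∀ ⦃s t : α⦄, s ≤ t → (κ s t).natDegree ≤ ρ s t
  diag : ∀ s : α, κ s s = 1
  left : ∀ ⦃s t : α⦄, s ≤ t → conv (rev ρ κ) κ s t = dlt s t
  right : ∀ ⦃s t : α⦄, s ≤ t → conv κ (rev ρ κ) s t = dlt s t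

/-- The reduced kernel `κ̄`: `κ̄_{st} = κ_{st}/(x-1)` for `s < t` and `κ̄_{ss} = -1`. -/
def red [PartialOrder α] (κ : α → α → Polynomial ℤ) : α → α → Polynomial ℤ :=
  fun s t => if s = t then -1 else κ s t /ₘ (X - 1)

/-- `H` is the Chow function of `κ`, i.e. `H = -(κ̄)⁻¹`. -/
structure IsChow [PartialOrder α] [LocallyFiniteOrder α] (κ H : α → α → Polynomial ℤ) : Prop where
  left : ∀ ⦃s t : α⦄, s ≤ t → conv (red κ) H s t = -dlt s t
  right : ∀ ⦃s t : α⦄, s ≤ t → conv H (red κ) s t = -dlt s t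

/-- `f` is the right KLS function of the kernel `κ`. -/
structure IsRightKLS [PartialOrder α] [LocallyFiniteOrder α] (ρ : α → α → ℕ)
    (κ f : α → α → Polynomial ℤ) : Prop where
  diag : ∀ s : α, f s s = 1
  degLT : ∀ ⦃s t : α⦄, s < t → 2 * (f s t).natDegree < ρ s t
  rev_eq : ∀ ⦃s t : α⦄, s ≤ t → rev ρ f s t = conv κ f s t

/-- `g` is the left KLS function of the kernel `κ`. -/
structure IsLeftKLS [PartialOrder α] [LocallyFiniteOrder α] (ρ : α → α → ℕ)
    (κ g : α → α → Polynomial ℤ) : Prop where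
  diag : ∀ s : α, g s s = 1
  degLT : ∀ ⦃s t : α⦄, s < t → 2 * (g s t).natDegree < ρ s t
  rev_eq : ∀ ⦃s t : α⦄, s ≤ t → rev ρ g s t = conv g κ s t

/-- `p` is symmetric with center of symmetry `d/2`, i.e. `p(x) = x^d p(1/x)`. -/
def PolySymm (d : ℕ) (p : Polynomial ℤ) : Prop := p.natDegree ≤ d ∧ p.reflect d = p

/-- All coefficients of `p` are non-negative. -/
def PolyNonneg (p : Polynomial ℤ) : Prop := ∀ n, 0 ≤ p.coeff n

/-- The coefficient sequence of `p` is unimodal. -/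
def PolyUnimodal (p : Polynomial ℤ) : Prop :=
  ∃ j, (∀ i < j, p.coeff i ≤ p.coeff (i + 1)) ∧ ∀ i, j ≤ i → p.coeff (i + 1) ≤ p.coeff i

end

/-!
Work in the incidence algebra and write `A` for the reduced kernel `κ̄`. Reversal does nothing to
the value of a polynomial at `x = 1`, so `κ^rev κ = δ` forces `κ_{st}(1) = 0` for `s < t`. Hence the
division defining `A` is exact, that is, `(x - 1) A = κ - x δ`. Reversing this identity gives
`(1 - x) A^rev = x κ^rev - δ`, and multiplying by `κ` on the right turns the right-hand side into
`x δ - κ = (1 - x) A`. So `A^rev κ = A`.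

Since `A ℋ = ℋ A = -δ` and reversal is multiplicative, `ℋ^rev A^rev = -δ` as well, and therefore
`ℋ^rev = -ℋ^rev A ℋ = -ℋ^rev A^rev κ ℋ = κ ℋ = x ℋ + (1 - x) δ`. At `s < t` this reads
`x^{ρ_{st}} ℋ_{st}(1/x) = x ℋ_{st}(x)`.
-/

section Induction

theorem interval_induction_left {α : Type*} [Preorder α] [LocallyFiniteOrder α] {t : α}
    {p : α → Prop} (step : ∀ s ≤ t, (∀ w, s < w → w ≤ t → p w) → p s) (s : α) (hst : s ≤ t) :
    p s :=
  step s hst fun w _ hwt => interval_induction_left step w hwt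
termination_by #(Icc s t)
decreasing_by exact card_lt_card (Icc_ssubset_Icc_left hst ‹s < w› le_rfl)

end Induction

section Reflect

variable {R : Type*}

theorem reflect_sum [Semiring R] {ι : Type*} (N : ℕ) (S : Finset ι) (f : ι → R[X]) :
    (∑ i ∈ S, f i).reflect N = ∑ i ∈ S, (f i).reflect N :=
  map_sum (⟨⟨reflect N, reflect_zero⟩, fun p q => reflect_add p q N⟩ : R[X] →+ R[X]) f S

theorem reflect_add_one [Semiring R] {N : ℕ} {p : R[X]} (hp : p.natDegree ≤ N) :
    p.reflect (N + 1) = X * p.reflect N := by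
  have h := reflect_mul (1 : R[X]) p (F := 1) (by simp) hp
  rwa [one_mul, reflect_one, pow_one, add_comm] at h

theorem eval_one_reflect [CommSemiring R] {N : ℕ} {p : R[X]} (hp : p.natDegree ≤ N) :
    (p.reflect N).eval 1 = p.eval 1 := by
  let : Invertible (1 : R) := invertibleOne
  simpa using eval₂_reflect_mul_pow (RingHom.id R) 1 N p hp

theorem natDegree_le_of_reflect_add_one_eq_X_mul [Semiring R] {n : ℕ} {p : R[X]}
    (hp : p.natDegree ≤ n + 1) (h : p.reflect (n + 1) = X * p) : p.natDegree ≤ n := by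
  have hcoeff : p.coeff (n + 1) = 0 := by
    simpa using congrArg (coeff · 0) h
  exact natDegree_le_pred hp hcoeff

theorem reflect_eq_self_of_reflect_add_one_eq_X_mul [Semiring R] {n : ℕ} {p : R[X]}
    (hp : p.natDegree ≤ n + 1) (h : p.reflect (n + 1) = X * p) : p.reflect n = p := by
  rw [reflect_add_one (natDegree_le_of_reflect_add_one_eq_X_mul hp h)] at h
  exact isRegular_X.left h

end Reflect

section Algebra

variable {S B : Type*} [CommRing S] [Ring B] [Algebra S B] {x : S} {k k' a a' h h' : B}

theorem mul_eq_of_sub_one_smul_eq (hx : IsSMulRegular B (x - 1)) (hk : k' * k = 1)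
    (ha : (x - 1) • a = k - x • 1) (ha' : (1 - x) • a' = x • k' - 1) : a' * k = a :=
  hx <| calc
    (x - 1) • (a' * k) = -((1 - x) • a' * k) := by rw [smul_mul_assoc, ← neg_smul, neg_sub]
    _ = k - x • 1 := by rw [ha', sub_mul, smul_mul_assoc, hk, one_mul, neg_sub]
    _ = (x - 1) • a := ha.symm

theorem eq_smul_add_of_mul_eq_neg_one (ha : (x - 1) • a = k - x • 1) (hak : a' * k = a)
    (hah : a * h = -1) (hha' : h' * a' = -1) : h' = x • h + (1 - x) • 1 :=
  calc
    h' = -(h' * (a * h)) := by rw [hah, mul_neg_one, neg_neg]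
    _ = -(h' * a' * (k * h)) := by rw [← hak]; simp only [mul_assoc]
    _ = ((x - 1) • a + x • 1) * h := by rw [hha', neg_one_mul, neg_neg, ha, sub_add_cancel]
    _ = x • h + (1 - x) • 1 := by
      rw [add_mul, smul_mul_assoc, smul_mul_assoc, hah, one_mul, smul_neg, ← neg_smul, neg_sub,
        add_comm]

end Algebra

section IncidenceAlgebra

open IncidenceAlgebra

variable {R α : Type*}

theorem isSMulRegular_incidenceAlgebra {M 𝕜 : Type*} [LE α] [Zero 𝕜] [SMulZeroClass M 𝕜] {c : M}
    (hc : IsSMulRegular 𝕜 c) : IsSMulRegular (IncidenceAlgebra 𝕜 α) c := fun a b hab => by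
  ext s t
  exact hc (congrArg (fun f : IncidenceAlgebra 𝕜 α => f s t) hab)

section Semiring

variable [Preorder α] [Semiring R] {ρ : α → α → ℕ}

/-- Membership in the subalgebra `I_ρ(P)`. -/
def RankBounded (ρ : α → α → ℕ) (a : IncidenceAlgebra R[X] α) : Prop :=
  ∀ ⦃s t : α⦄, s ≤ t → (a s t).natDegree ≤ ρ s t

/-- The reversal `a ↦ a^rev` with respect to `ρ`. It is defined on the whole incidence algebra, but
is multiplicative only on `I_ρ(P)`. -/
noncomputable def reversal (ρ : α → α → ℕ) :
    IncidenceAlgebra R[X] α →+ IncidenceAlgebra R[X] α where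
  toFun a := ⟨fun s t => (a s t).reflect (ρ s t), fun _ _ h => by
    rw [apply_eq_zero_of_not_le h, reflect_zero]⟩
  map_zero' := by ext1; exact reflect_zero
  map_add' a b := by ext1; exact reflect_add _ _ _

theorem reversal_apply (a : IncidenceAlgebra R[X] α) (s t : α) :
    reversal ρ a s t = (a s t).reflect (ρ s t) :=
  rfl

theorem IsWeakRank.apply_self (hρ : IsWeakRank ρ) (s : α) : ρ s s = 0 := by
  simpa using hρ.add (le_refl s) (le_refl s)

theorem reversal_one [DecidableEq α] (hρ : IsWeakRank ρ) :
    reversal ρ (1 : IncidenceAlgebra R[X] α) = 1 := by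
  ext1 s t _
  rw [reversal_apply, one_apply]
  split_ifs with h
  · rw [h, hρ.apply_self, reflect_one, pow_zero]
  · exact reflect_zero

theorem reversal_mul [LocallyFiniteOrder α] (hρ : IsWeakRank ρ) {a b : IncidenceAlgebra R[X] α}
    (ha : RankBounded ρ a) (hb : RankBounded ρ b) :
    reversal ρ (a * b) = reversal ρ a * reversal ρ b := by
  ext1 s t _
  simp only [reversal_apply, mul_apply, reflect_sum]
  refine sum_congr rfl fun w hw => ?_
  obtain ⟨hsw, hwt⟩ := mem_Icc.1 hw
  rw [hρ.add hsw hwt, reflect_mul _ _ (ha hsw) (hb hwt)]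

theorem reversal_smul {d : ℕ} {p : R[X]} (hp : p.natDegree ≤ d) {a : IncidenceAlgebra R[X] α}
    (ha : RankBounded ρ a) :
    reversal (fun s t => d + ρ s t) (p • a) = p.reflect d • reversal ρ a := by
  ext1 s t hst
  exact reflect_mul _ _ hp (ha hst)

theorem rankBounded_one [DecidableEq α] : RankBounded ρ (1 : IncidenceAlgebra R[X] α) :=
  fun s t _ => by rw [one_apply]; split_ifs <;> simp

end Semiring

theorem RankBounded.neg [Preorder α] [Ring R] {ρ : α → α → ℕ} {a : IncidenceAlgebra R[X] α}
    (ha : RankBounded ρ a) : RankBounded ρ (-a) := fun s t hst => by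
  simpa only [IncidenceAlgebra.neg_apply, natDegree_neg] using ha hst

variable [PartialOrder α]

theorem incidenceAlgebra_mul_apply_eq_add_sum_Ioc [LocallyFiniteOrder α] {𝕜 : Type*}
    [NonUnitalNonAssocSemiring 𝕜] (a b : IncidenceAlgebra 𝕜 α) {s t : α} (hst : s ≤ t) :
    (a * b) s t = a s s * b s t + ∑ w ∈ Ioc s t, a s w * b w t := by
  rw [mul_apply, add_sum_Ioc_eq_sum_Icc (f := fun w => a s w * b w t) hst]

theorem RankBounded.of_mul [Ring R] [LocallyFiniteOrder α] {ρ : α → α → ℕ}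
    (hρ : IsWeakRank ρ) {a b : IncidenceAlgebra R[X] α} (ha : RankBounded ρ a)
    (hunit : ∀ s, IsUnit (a s s)) (hab : RankBounded ρ (a * b)) : RankBounded ρ b := by
  intro s t
  refine interval_induction_left (p := fun s => (b s t).natDegree ≤ ρ s t) (fun s hst ih => ?_) s
  obtain ⟨c, hc⟩ : ∃ c, C c = a s s := natDegree_eq_zero.1 <| by
    simpa [hρ.apply_self] using ha (le_refl s)
  have hc_unit : IsUnit c := isUnit_C.1 (hc ▸ hunit s)
  have hrec : C c * b s t = (a * b) s t - ∑ w ∈ Ioc s t, a s w * b w t := by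
    rw [incidenceAlgebra_mul_apply_eq_add_sum_Ioc a b hst, hc, add_sub_cancel_right]
  have hsum : (∑ w ∈ Ioc s t, a s w * b w t).natDegree ≤ ρ s t :=
    natDegree_sum_le_of_forall_le _ _ fun w hw => by
      obtain ⟨hsw, hwt⟩ := mem_Ioc.1 hw
      rw [hρ.add hsw.le hwt]
      exact natDegree_mul_le_of_le (ha hsw.le) (ih w hsw hwt)
  rw [← natDegree_C_mul_of_isUnit hc_unit, hrec]
  exact natDegree_sub_le_of_le (hab hst) hsum |>.trans_eq (max_self _)

section CommRing

variable [CommRing R] [DecidableEq α] {ρ : α → α → ℕ}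

/-- The reduced kernel `κ̄`. The quotient by `x - 1` is the intended one only if `κ_{st}(1) = 0` for
all `s < t`. -/
noncomputable def reducedKernel (κ : IncidenceAlgebra R[X] α) : IncidenceAlgebra R[X] α :=
  ⟨fun s t => if s = t then -1 else κ s t /ₘ (X - 1), fun s t h => by
    rw [if_neg fun hst => h hst.le, apply_eq_zero_of_not_le h, zero_divByMonic]⟩

theorem reducedKernel_apply (κ : IncidenceAlgebra R[X] α) (s t : α) :
    reducedKernel κ s t = if s = t then -1 else κ s t /ₘ (X - 1) :=
  rfl

theorem RankBounded.reducedKernel {κ : IncidenceAlgebra R[X] α} (hκ : RankBounded ρ κ) :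
    RankBounded ρ (reducedKernel κ) := fun s t hst => by
  rw [reducedKernel_apply]
  split_ifs
  · simp
  · rw [← C_1, natDegree_divByMonic _ (monic_X_sub_C 1)]
    exact (Nat.sub_le _ _).trans (hκ hst)

theorem X_sub_one_smul_reducedKernel {κ : IncidenceAlgebra R[X] α} (hdiag : ∀ s, κ s s = 1)
    (hroot : ∀ s t, s < t → (κ s t).eval 1 = 0) :
    (X - 1 : R[X]) • reducedKernel κ = κ - (X : R[X]) • 1 := by
  ext1 s t hst
  rw [constSMul_apply, IncidenceAlgebra.sub_apply, constSMul_apply, one_apply,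
    reducedKernel_apply, smul_eq_mul, smul_eq_mul]
  split_ifs with h
  · rw [h, hdiag]
    ring
  · have hdiv := mul_divByMonic_eq_iff_isRoot.2 (hroot s t (hst.lt_of_ne h))
    rw [C_1] at hdiv
    rw [hdiv, mul_zero, sub_zero]

theorem one_sub_X_smul_reversal (hρ : IsWeakRank ρ) {κ A : IncidenceAlgebra R[X] α}
    (hκ : RankBounded ρ κ) (hA : RankBounded ρ A)
    (h : (X - 1 : R[X]) • A = κ - (X : R[X]) • 1) :
    (1 - X : R[X]) • reversal ρ A = (X : R[X]) • reversal ρ κ - 1 := by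
  have hX : (X - 1 : R[X]).natDegree ≤ 1 := natDegree_X_sub_C_le 1
  -- The factor `x - 1` raises degrees by one, so reverse with respect to `1 + ρ`.
  have hrev := congrArg (reversal fun s t => 1 + ρ s t) h
  rw [← one_smul R[X] κ, map_sub, reversal_smul hX hA, reversal_smul (by simp) hκ,
    reversal_smul natDegree_X_le rankBounded_one, reversal_one hρ, reflect_sub, reflect_one_X,
    reflect_one, pow_one, one_smul] at hrev
  exact hrev

variable [LocallyFiniteOrder α]

theorem eval_one_eq_zero_of_reversal_mul_self_eq_one (h2 : IsLeftRegular (2 : R))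
    {κ : IncidenceAlgebra R[X] α} (hdeg : RankBounded ρ κ) (hdiag : ∀ s, κ s s = 1)
    (hκ : reversal ρ κ * κ = 1) {s t : α} (hst : s < t) : (κ s t).eval 1 = 0 := by
  suffices ∀ s ≤ t, s ≠ t → (κ s t).eval 1 = 0 from this s hst.le hst.ne
  refine interval_induction_left fun s hst ih hne => ?_
  have hrev {u v : α} (huv : u ≤ v) : (reversal ρ κ u v).eval 1 = (κ u v).eval 1 :=
    eval_one_reflect (hdeg huv)
  have hsum : ∑ w ∈ Icc s t, (κ s w).eval 1 * (κ w t).eval 1 = 0 := by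
    have h := congrArg (fun f => (f s t).eval 1) hκ
    simp only [mul_apply, one_apply, hne, if_false, eval_finsetSum, eval_mul, eval_zero] at h
    rw [← h]
    exact sum_congr rfl fun w hw => by rw [hrev (mem_Icc.1 hw).1]
  have hends : ∑ w ∈ Icc s t, (κ s w).eval 1 * (κ w t).eval 1 = 2 * (κ s t).eval 1 := by
    rw [sum_eq_add_of_mem s t (left_mem_Icc.2 hst) (right_mem_Icc.2 hst) hne fun w hw hw' => ?_]
    · simp only [hdiag, eval_one, one_mul, mul_one, two_mul]
    · obtain ⟨hsw, hwt⟩ := mem_Icc.1 hw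
      rw [ih w (hsw.lt_of_ne hw'.1.symm) hwt hw'.2, mul_zero]
  exact h2 ((hends.symm.trans hsum).trans (mul_zero 2).symm)

theorem reversal_chow (hρ : IsWeakRank ρ) {κ A H : IncidenceAlgebra R[X] α}
    (hκ : RankBounded ρ κ) (hA : RankBounded ρ A) (hH : RankBounded ρ H)
    (hκκ : reversal ρ κ * κ = 1) (hAκ : (X - 1 : R[X]) • A = κ - (X : R[X]) • 1)
    (hAH : A * H = -1) (hHA : H * A = -1) :
    reversal ρ H = (X : R[X]) • H + (1 - X : R[X]) • 1 := by
  have hreg : IsSMulRegular R[X] (X - 1 : R[X]) := (monic_X_sub_C 1).isRegular.left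
  have hrevA : reversal ρ A * κ = A :=
    mul_eq_of_sub_one_smul_eq (isSMulRegular_incidenceAlgebra hreg) hκκ hAκ
      (one_sub_X_smul_reversal hρ hκ hA hAκ)
  have hrevH : reversal ρ H * reversal ρ A = -1 := by
    rw [← reversal_mul hρ hH hA, hHA, map_neg, reversal_one hρ]
  exact eq_smul_add_of_mul_eq_neg_one hAκ hrevA hAH hrevH

theorem chow_symmetric_general (hρ : IsWeakRank ρ) (h2 : IsLeftRegular (2 : R))
    {κ H : IncidenceAlgebra R[X] α} (hdeg : RankBounded ρ κ) (hdiag : ∀ s, κ s s = 1)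
    (hκ : reversal ρ κ * κ = 1) (hκH : reducedKernel κ * H = -1) (hHκ : H * reducedKernel κ = -1)
    {s t : α} (hst : s < t) :
    (H s t).natDegree ≤ ρ s t - 1 ∧ (H s t).reflect (ρ s t - 1) = H s t := by
  have hA : (X - 1 : R[X]) • reducedKernel κ = κ - (X : R[X]) • 1 :=
    X_sub_one_smul_reducedKernel hdiag fun _ _ =>
      eval_one_eq_zero_of_reversal_mul_self_eq_one h2 hdeg hdiag hκ
  have hunit (s : α) : IsUnit (reducedKernel κ s s) := by
    rw [reducedKernel_apply, if_pos rfl]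
    exact isUnit_one.neg
  have hdegH : RankBounded ρ H :=
    hdeg.reducedKernel.of_mul hρ hunit (hκH ▸ rankBounded_one.neg)
  have hrev : (H s t).reflect (ρ s t) = X * H s t := by
    have h := reversal_chow hρ hdeg hdeg.reducedKernel hdegH hκ hA hκH hHκ
    simpa [reversal_apply, constSMul_apply, hst.ne] using congrArg (fun f => f s t) h
  obtain ⟨n, hn⟩ := Nat.exists_eq_add_one.2 (hρ.pos hst)
  have hdegst : (H s t).natDegree ≤ n + 1 := hn ▸ hdegH hst.le
  rw [hn] at hrev ⊢
  exact ⟨natDegree_le_of_reflect_add_one_eq_X_mul hdegst hrev,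
    reflect_eq_self_of_reflect_add_one_eq_X_mul hdegst hrev⟩

end CommRing

end IncidenceAlgebra

section Pairs

open IncidenceAlgebra

variable {α : Type*} [PartialOrder α] {ρ : α → α → ℕ}

/-- The element of the incidence algebra with the values of `a` on intervals `s ≤ t`; the values
of `a` at other pairs are discarded. -/
noncomputable def toIncidenceAlgebra {𝕜 : Type*} [Zero 𝕜] (a : α → α → 𝕜) :
    IncidenceAlgebra 𝕜 α :=
  ⟨fun s t => if s ≤ t then a s t else 0, fun _ _ h => if_neg h⟩

theorem toIncidenceAlgebra_apply {𝕜 : Type*} [Zero 𝕜] (a : α → α → 𝕜) {s t : α} (hst : s ≤ t) :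
    toIncidenceAlgebra a s t = a s t :=
  if_pos hst

theorem reversal_toIncidenceAlgebra (a : α → α → ℤ[X]) :
    reversal ρ (toIncidenceAlgebra a) = toIncidenceAlgebra (rev ρ a) := by
  ext1 s t hst
  rw [reversal_apply, toIncidenceAlgebra_apply _ hst, toIncidenceAlgebra_apply _ hst, rev]

theorem reducedKernel_toIncidenceAlgebra (κ : α → α → ℤ[X]) :
    reducedKernel (toIncidenceAlgebra κ) = toIncidenceAlgebra (red κ) := by
  ext1 s t hst
  rw [reducedKernel_apply, toIncidenceAlgebra_apply _ hst, toIncidenceAlgebra_apply _ hst, red]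

variable [LocallyFiniteOrder α]

theorem toIncidenceAlgebra_mul_apply (a b : α → α → ℤ[X]) (s t : α) :
    (toIncidenceAlgebra a * toIncidenceAlgebra b) s t = conv a b s t := by
  rw [mul_apply, conv]
  refine sum_congr rfl fun w hw => ?_
  obtain ⟨hsw, hwt⟩ := mem_Icc.1 hw
  rw [toIncidenceAlgebra_apply _ hsw, toIncidenceAlgebra_apply _ hwt]

variable {κ H : α → α → ℤ[X]}

theorem IsKernel.rankBounded (hκ : IsKernel ρ κ) : RankBounded ρ (toIncidenceAlgebra κ) :=
  fun s t hst => by simpa only [toIncidenceAlgebra_apply _ hst] using hκ.degLE hst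

theorem IsKernel.toIncidenceAlgebra_apply_self (hκ : IsKernel ρ κ) (s : α) :
    toIncidenceAlgebra κ s s = 1 := by
  rw [toIncidenceAlgebra_apply _ le_rfl, hκ.diag]

theorem IsKernel.reversal_mul_self (hκ : IsKernel ρ κ) :
    reversal ρ (toIncidenceAlgebra κ) * toIncidenceAlgebra κ = 1 := by
  ext1 s t hst
  rw [reversal_toIncidenceAlgebra, toIncidenceAlgebra_mul_apply, hκ.left hst, one_apply, dlt]

theorem IsChow.reducedKernel_mul (hH : IsChow κ H) :
    reducedKernel (toIncidenceAlgebra κ) * toIncidenceAlgebra H = -1 := by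
  ext1 s t hst
  rw [reducedKernel_toIncidenceAlgebra, toIncidenceAlgebra_mul_apply, hH.left hst,
    IncidenceAlgebra.neg_apply, one_apply, dlt]

theorem IsChow.mul_reducedKernel (hH : IsChow κ H) :
    toIncidenceAlgebra H * reducedKernel (toIncidenceAlgebra κ) = -1 := by
  ext1 s t hst
  rw [reducedKernel_toIncidenceAlgebra, toIncidenceAlgebra_mul_apply, hH.right hst,
    IncidenceAlgebra.neg_apply, one_apply, dlt]

end Pairs

/-- Proposition 3.4(ii): the Chow function is symmetric, i.e.
`ℋ_{st}(x) = x^{ρ_{st}-1} ℋ_{st}(1/x)` for every `s < t`. -/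
theorem chow_symmetric [PartialOrder α] [LocallyFiniteOrder α]
    (ρ : α → α → ℕ) (hρ : IsWeakRank ρ)
    (κ : α → α → Polynomial ℤ) (hκ : IsKernel ρ κ)
    (H : α → α → Polynomial ℤ) (hH : IsChow κ H)
    (s t : α) (hst : s < t) :
    PolySymm (ρ s t - 1) (H s t) := by
  have h := chow_symmetric_general hρ (IsRegular.of_ne_zero two_ne_zero).left hκ.rankBounded
    hκ.toIncidenceAlgebra_apply_self hκ.reversal_mul_self hH.reducedKernel_mul
    hH.mul_reducedKernel hst
  rwa [toIncidenceAlgebra_apply H hst.le] at h
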